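/- arXiv:math/0307140 — 2 statements merged into one kernel-verified Lean document; each statement's English description precedes it below -/
import Mathlib

section
/- Let μ and μ' be finite positive Borel measures on ℝ with odd rearrangements v̂ and v̂' respectively. Then μ ⪯ μ' if and only if v̂(x) ≤ v̂'(x) for all x > 0. (Formula (2.6) of Proposition 1.) -/
open MeasureTheory Set Filter
open scoped ENNReal

noncomputable section

/-- `waveSup μ s = sup { μ(A) : A ⊆ ℝ Borel, Leb(A) ≤ s }`. -/
def waveSup (μ : Measure ℝ) (s : ℝ) : ℝ≥0∞ :=
  ⨆ (A : Set ℝ) (_ : MeasurableSet A) (_ : volume A ≤ ENNReal.ofReal s), μ A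

/-- The partial ordering `μ ⪯ μ'` among positive measures on `ℝ`. -/
def MeasPrec (μ μ' : Measure ℝ) : Prop :=
  ∀ s > 0, waveSup μ s ≤ waveSup μ' s

/-- A set of finite Lebesgue measure can be shrunk to any prescribed smaller measure while
keeping a given subset. -/
lemma exists_measurableSet_between_volume_eq {P Q : Set ℝ} (hP : MeasurableSet P)
    (hQ : MeasurableSet Q) (hPQ : P ⊆ Q) (hQfin : volume Q ≠ ∞) {s : ℝ} (hs : 0 ≤ s)
    (hPs : volume P ≤ ENNReal.ofReal s) (hsQ : ENNReal.ofReal s ≤ volume Q) :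
    ∃ A, MeasurableSet A ∧ P ⊆ A ∧ A ⊆ Q ∧ volume A = ENNReal.ofReal s := by
  rcases hsQ.eq_or_lt with h | h
  · exact ⟨Q, hQ, hPQ, subset_rfl, h.symm⟩
  let F : ℝ → Set ℝ := fun r => P ∪ (Q ∩ Icc (-r) r)
  have hFQ : ∀ r, F r ⊆ Q := fun r => union_subset hPQ inter_subset_left
  have hFfin : ∀ r, volume (F r) ≠ ∞ := fun r => measure_ne_top_of_subset (hFQ r) hQfin
  have hFmono : Monotone F := fun a b hab =>
    union_subset_union_right _ (inter_subset_inter_right _ (Icc_subset_Icc (by linarith) hab))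
  have hFm : ∀ r, MeasurableSet (F r) := fun r => hP.union (hQ.inter measurableSet_Icc)
  have hFU : ⋃ n : ℕ, F n = Q := by
    refine subset_antisymm (iUnion_subset fun n => hFQ n) fun x hx => ?_
    obtain ⟨n, hn⟩ := exists_nat_ge |x|
    exact mem_iUnion.2 ⟨n, Or.inr ⟨hx, abs_le.1 hn⟩⟩
  have hlim : Tendsto (fun n : ℕ => volume (F n)) atTop (nhds (volume Q)) := by
    rw [← hFU]
    exact tendsto_measure_iUnion_atTop fun a b hab => hFmono (by exact_mod_cast hab)
  obtain ⟨n, hn⟩ := (hlim.eventually (lt_mem_nhds h)).exists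
  have hlip : LipschitzWith 2 fun r => (volume (F r)).toReal := by
    refine LipschitzWith.of_le_add_mul _ fun x y => ?_
    have hsub : F x ⊆ F y ∪ (Icc y x ∪ Icc (-x) (-y)) := by
      rintro w (hw | ⟨hwQ, hw1, hw2⟩)
      · exact Or.inl (Or.inl hw)
      · by_cases h1 : w ≤ y
        · by_cases h2 : -y ≤ w
          · exact Or.inl (Or.inr ⟨hwQ, h2, h1⟩)
          · exact Or.inr (Or.inr ⟨hw1, (not_le.1 h2).le⟩)
        · exact Or.inr (Or.inl ⟨(not_le.1 h1).le, hw2⟩)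
    have hle : volume (F x) ≤ volume (F y) + (ENNReal.ofReal |x - y| + ENNReal.ofReal |x - y|) := by
      refine (measure_mono hsub).trans ((measure_union_le _ _).trans ?_)
      gcongr
      refine (measure_union_le _ _).trans ?_
      rw [Real.volume_Icc, Real.volume_Icc]
      gcongr
      · exact le_abs_self _
      · exact le_trans (by linarith) (le_abs_self _)
    have := ENNReal.toReal_mono (by simp [hFfin y]) hle
    rw [ENNReal.toReal_add (hFfin y) (by simp), ENNReal.toReal_add (by simp) (by simp),
      ENNReal.toReal_ofReal (abs_nonneg _)] at this
    rw [Real.dist_eq]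
    push_cast
    linarith
  have hF0 : volume (F 0) ≤ ENNReal.ofReal s := by
    refine (measure_union_le _ _).trans ?_
    have : volume (Q ∩ Icc (-(0 : ℝ)) 0) = 0 := measure_mono_null inter_subset_right (by simp)
    rwa [this, add_zero]
  have hmem : s ∈ Icc (volume (F 0)).toReal (volume (F (n : ℝ))).toReal :=
    ⟨ENNReal.toReal_le_of_le_ofReal hs hF0, (ENNReal.ofReal_le_iff_le_toReal (hFfin _)).1 hn.le⟩
  obtain ⟨r, -, hr⟩ :=
    intermediate_value_Icc (Nat.cast_nonneg (α := ℝ) n) hlip.continuous.continuousOn hmem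
  refine ⟨F r, hFm r, subset_union_left, hFQ r, ?_⟩
  rw [← ENNReal.ofReal_toReal (hFfin r)]
  exact congrArg _ hr

/-- For an integrable function `z` and `s > 0`, there is a set of measure at most `s` which meets
each superlevel set of `z` in as much measure as possible. -/
lemma exists_measurableSet_volume_inter_superlevel {z : ℝ → ℝ} (hzm : Measurable z)
    (hz : Integrable z) {s : ℝ} (hs : 0 < s) :
    ∃ A, MeasurableSet A ∧ volume A ≤ ENNReal.ofReal s ∧
      ∀ t > 0, min (ENNReal.ofReal s) (volume {x | t < z x}) ≤ volume ({x | t < z x} ∩ A) := by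
  have hm : ∀ t, MeasurableSet {x | t < z x} := fun t => measurableSet_lt measurable_const hzm
  have hfin : ∀ t > 0, volume {x | t < z x} ≠ ∞ := fun t ht => (hz.measure_gt_lt_top ht).ne
  let T : Set ℝ := {t | 0 < t ∧ volume {x | t < z x} ≤ ENNReal.ofReal s}
  have hTne : T.Nonempty := by
    have hanti : Antitone fun n : ℕ => {x | (n : ℝ) + 1 < z x} := fun a b hab x hx =>
      lt_of_le_of_lt (by gcongr) (show (b : ℝ) + 1 < z x from hx)
    have hempty : ⋂ n : ℕ, {x | (n : ℝ) + 1 < z x} = ∅ := by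
      refine eq_empty_of_forall_notMem fun x hx => ?_
      obtain ⟨n, hn⟩ := exists_nat_ge (z x)
      have : (n : ℝ) + 1 < z x := mem_iInter.1 hx n
      linarith
    have hlim := tendsto_measure_iInter_atTop (μ := volume)
      (fun n : ℕ => (hm ((n : ℝ) + 1)).nullMeasurableSet) hanti ⟨0, hfin _ (by positivity)⟩
    rw [hempty, measure_empty] at hlim
    obtain ⟨n, hn⟩ := (hlim.eventually (gt_mem_nhds (ENNReal.ofReal_pos.2 hs))).exists
    exact ⟨(n : ℝ) + 1, by positivity, hn.le⟩
  have hTbdd : BddBelow T := ⟨0, fun t ht => ht.1.le⟩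
  let c : ℝ := sInf T
  have hc0 : 0 ≤ c := le_csInf hTne fun t ht => ht.1.le
  have hgt : volume {x | c < z x} ≤ ENNReal.ofReal s := by
    have hU : {x | c < z x} = ⋃ n : ℕ, {x | c + 1 / ((n : ℝ) + 1) < z x} := by
      ext x
      simp only [mem_ofPred_eq, mem_iUnion]
      constructor
      · intro hx
        obtain ⟨n, hn⟩ := exists_nat_one_div_lt (sub_pos.2 hx)
        exact ⟨n, by linarith⟩
      · rintro ⟨n, hn⟩
        have : 0 < 1 / ((n : ℝ) + 1) := by positivity
        linarith
    have hmono : Monotone fun n : ℕ => {x | c + 1 / ((n : ℝ) + 1) < z x} := fun a b hab x hx =>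
      lt_of_le_of_lt (add_le_add_right (one_div_le_one_div_of_le (by positivity) (by gcongr)) _)
        (show c + 1 / ((a : ℝ) + 1) < z x from hx)
    rw [hU, hmono.measure_iUnion]
    refine iSup_le fun n => ?_
    obtain ⟨t, ht, htc⟩ := exists_lt_of_csInf_lt hTne
      (show c < c + 1 / ((n : ℝ) + 1) from lt_add_of_pos_right _ (by positivity))
    exact (measure_mono fun x hx => htc.trans hx).trans ht.2
  rcases hc0.eq_or_lt with hc | hc
  · refine ⟨_, hm c, hgt, fun t ht => ?_⟩
    exact (min_le_right _ _).trans (measure_mono fun x (hx : t < z x) =>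
      ⟨hx, show c < z x by linarith⟩)
  have hbelow : ∀ t, 0 < t → t < c → ENNReal.ofReal s < volume {x | t < z x} := fun t ht htc =>
    not_le.1 fun h => (csInf_le hTbdd ⟨ht, h⟩).not_gt htc
  have hge : ENNReal.ofReal s ≤ volume {x | c ≤ z x} := by
    have hpos : ∀ n : ℕ, 0 < c - c / ((n : ℝ) + 2) := fun n =>
      sub_pos.2 (div_lt_self hc (by linarith [Nat.cast_nonneg (α := ℝ) n]))
    have hI : {x | c ≤ z x} = ⋂ n : ℕ, {x | c - c / ((n : ℝ) + 2) < z x} := by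
      ext x
      simp only [mem_ofPred_eq, mem_iInter]
      constructor
      · intro hx n
        have : 0 < c / ((n : ℝ) + 2) := by positivity
        linarith
      · intro hx
        by_contra! hlt
        obtain ⟨n, hn⟩ := exists_nat_gt (c / (c - z x))
        have hn' : c / (c - z x) < (n : ℝ) + 2 := by linarith
        have h1 := hx n
        have h2 : c / ((n : ℝ) + 2) < c - z x := by
          rw [div_lt_iff₀ (by positivity)]
          rwa [div_lt_iff₀ (sub_pos.2 hlt), mul_comm] at hn'
        linarith
    have hanti : Antitone fun n : ℕ => {x | c - c / ((n : ℝ) + 2) < z x} := fun a b hab x hx =>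
      lt_of_le_of_lt
        (sub_le_sub_left (div_le_div_of_nonneg_left hc.le (by positivity) (by gcongr)) _)
        (show c - c / ((b : ℝ) + 2) < z x from hx)
    have hlim := tendsto_measure_iInter_atTop (μ := volume)
      (fun n : ℕ => (hm (c - c / ((n : ℝ) + 2))).nullMeasurableSet) hanti ⟨0, hfin _ (hpos 0)⟩
    rw [← hI] at hlim
    exact ge_of_tendsto' hlim fun n =>
      (hbelow _ (hpos n) (sub_lt_self _ (by positivity))).le
  have hgefin : volume {x | c ≤ z x} ≠ ∞ :=
    measure_ne_top_of_subset (fun x (hx : c ≤ z x) => show c / 2 < z x by linarith)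
      (hfin (c / 2) (by positivity))
  obtain ⟨A, hA, hPA, hAQ, hAs⟩ := exists_measurableSet_between_volume_eq (hm c)
    (measurableSet_le measurable_const hzm) (fun x (hx : c < z x) => hx.le) hgefin hs.le hgt hge
  refine ⟨A, hA, hAs.le, fun t ht => ?_⟩
  rcases lt_or_ge t c with htc | htc
  · rw [← hAs]
    exact (min_le_left _ _).trans (measure_mono fun x hx => ⟨htc.trans_le (hAQ hx), hx⟩)
  · exact (min_le_right _ _).trans (measure_mono fun x (hx : t < z x) =>
      ⟨hx, hPA (htc.trans_lt hx)⟩)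

/-- Layer cake formula on a measurable set. -/
lemma setLIntegral_ofReal_eq_lintegral_volume_inter {f : ℝ → ℝ} (hf : AEMeasurable f)
    (hf0 : ∀ x, 0 ≤ f x) {A : Set ℝ} (hA : MeasurableSet A) :
    ∫⁻ x in A, ENNReal.ofReal (f x) = ∫⁻ t in Ioi (0 : ℝ), volume ({x | t < f x} ∩ A) := by
  rw [lintegral_eq_lintegral_meas_lt _ (Eventually.of_forall hf0) hf.restrict]
  simp only [Measure.restrict_apply' hA]

lemma aemeasurable_of_even_of_antitoneOn {f : ℝ → ℝ} (heven : ∀ x, f (-x) = f x)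
    (hanti : AntitoneOn f (Ioi 0)) : AEMeasurable f := by
  have hmono : MonotoneOn f (Iio 0) := fun x hx y hy hxy => by
    rw [← heven x, ← heven y]
    exact hanti (mem_Ioi.2 (neg_pos.2 hy)) (mem_Ioi.2 (neg_pos.2 hx)) (neg_le_neg hxy)
  have h := aemeasurable_union_iff.2
    ⟨aemeasurable_restrict_of_monotoneOn (μ := volume) measurableSet_Iio hmono,
      aemeasurable_restrict_of_antitoneOn (μ := volume) measurableSet_Ioi hanti⟩
  rwa [Iio_union_Ioi, restrict_compl_singleton] at h

/-- A symmetric interval meets each superlevel set of a symmetric decreasing function in as much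
measure as possible. -/
lemma volume_superlevel_inter_Ioo_of_even_of_antitoneOn {f : ℝ → ℝ} (heven : ∀ x, f (-x) = f x)
    (hanti : AntitoneOn f (Ioi 0)) {r : ℝ} (hr : 0 < r) (t : ℝ) :
    volume ({x | t < f x} ∩ Ioo (-r) r) =
      min (ENNReal.ofReal (2 * r)) (volume {x | t < f x}) := by
  have hI : volume (Ioo (-r) r) = ENNReal.ofReal (2 * r) := by
    rw [Real.volume_Ioo]; congr 1; ring
  have habs : ∀ x, f |x| = f x := fun x => by
    rcases abs_choice x with h | h <;> rw [h]
    exact heven x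
  refine le_antisymm (le_min (hI ▸ measure_mono inter_subset_right)
    (measure_mono inter_subset_left)) ?_
  by_cases h : ∀ x ∈ Ioo 0 r, t < f x
  · refine (min_le_left _ _).trans ?_
    rw [← hI, ← measure_sdiff_null (measure_singleton (0 : ℝ))]
    refine measure_mono fun x hx => ⟨?_, hx.1⟩
    change t < f x
    rw [← habs]
    exact h _ ⟨abs_pos.2 hx.2, abs_lt.2 hx.1⟩
  · push Not at h
    obtain ⟨y, hy, hyt⟩ := h
    rw [inter_eq_left.2]
    · exact min_le_right _ _
    · intro x (hx : t < f x)
      by_contra hxr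
      have hrx : r ≤ |x| := not_lt.1 fun h => hxr (abs_lt.1 h)
      have := hanti hy.1 (hr.trans_le hrx) (hy.2.le.trans hrx)
      rw [habs] at this
      linarith

/-- The maximal mass carried by sets of measure at most `s` is read off from the symmetric
rearrangement of the density. -/
lemma waveSup_eq_add_setLIntegral {μ μs : Measure ℝ} {z : ℝ → ℝ} (hz : Integrable z)
    (hz0 : ∀ x, 0 ≤ z x) (hsing : μs ⟂ₘ volume)
    (hdecomp : μ = μs + volume.withDensity (fun x => ENNReal.ofReal (z x)))
    {f : ℝ → ℝ} (heven : ∀ x, f (-x) = f x) (hf0 : ∀ x, 0 ≤ f x)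
    (hanti : AntitoneOn f (Ioi 0))
    (hrearr : ∀ c > 0, volume {x | c < f x} = volume {x | c < z x}) {r : ℝ} (hr : 0 < r) :
    waveSup μ (2 * r) = μs univ + ∫⁻ x in Ioo (-r) r, ENNReal.ofReal (f x) := by
  have hf := aemeasurable_of_even_of_antitoneOn heven hanti
  have hfint : ∫⁻ x in Ioo (-r) r, ENNReal.ofReal (f x) =
      ∫⁻ t in Ioi (0 : ℝ), min (ENNReal.ofReal (2 * r)) (volume {x | t < z x}) := by
    rw [setLIntegral_ofReal_eq_lintegral_volume_inter hf hf0 measurableSet_Ioo]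
    refine setLIntegral_congr_fun measurableSet_Ioi fun t ht => ?_
    simp only [volume_superlevel_inter_Ioo_of_even_of_antitoneOn heven hanti hr, hrearr t ht]
  have hμ : ∀ A, μ A = μs A + ∫⁻ x in A, ENNReal.ofReal (z x) := fun A => by
    rw [hdecomp, Measure.add_apply, withDensity_apply']
  rw [hfint]
  refine le_antisymm (iSup_le fun A => iSup_le fun hA => iSup_le fun hAs => ?_) ?_
  · rw [hμ, setLIntegral_ofReal_eq_lintegral_volume_inter hz.aemeasurable hz0 hA]
    gcongr with t
    · exact subset_univ A
    · exact le_min ((measure_mono inter_subset_right).trans hAs) (measure_mono inter_subset_left)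
  · obtain ⟨w, hwm, hzw⟩ := hz.aemeasurable
    obtain ⟨A, hA, hAs, hAt⟩ := exists_measurableSet_volume_inter_superlevel hwm
      (hz.congr hzw) (by positivity : 0 < 2 * r)
    obtain ⟨N, hN, hN1, hN2⟩ := hsing.symm
    have hNA : volume (A ∪ N) ≤ ENNReal.ofReal (2 * r) :=
      (measure_union_le _ _).trans (by rwa [hN1, add_zero])
    refine le_trans ?_
      (le_iSup_of_le (A ∪ N) (le_iSup_of_le (hA.union hN) (le_iSup_of_le hNA le_rfl)))
    rw [hμ]
    refine add_le_add ?_ (le_trans ?_ (lintegral_mono_set subset_union_left))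
    · rw [← measure_add_measure_compl hN, hN2, add_zero]
      exact measure_mono subset_union_right
    · rw [setLIntegral_ofReal_eq_lintegral_volume_inter hz.aemeasurable hz0 hA]
      refine setLIntegral_mono' measurableSet_Ioi fun t ht => ?_
      have hlevel : ({x | t < z x} : Set ℝ) =ᵐ[volume] {x | t < w x} := by
        filter_upwards [hzw] with x hx
        change (t < z x) = (t < w x)
        rw [hx]
      rw [measure_congr hlevel, measure_congr (hlevel.inter (ae_eq_refl A))]
      exact hAt t ht

lemma integrable_of_volume_superlevel_eq {z f : ℝ → ℝ} (hz : Integrable z) (hz0 : ∀ x, 0 ≤ z x)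
    (hf : AEMeasurable f) (hf0 : ∀ x, 0 ≤ f x)
    (hrearr : ∀ c > 0, volume {x | c < f x} = volume {x | c < z x}) : Integrable f := by
  refine (lintegral_ofReal_ne_top_iff_integrable hf.aestronglyMeasurable
    (Eventually.of_forall hf0)).1 ?_
  have h : ∫⁻ x, ENNReal.ofReal (f x) = ∫⁻ x, ENNReal.ofReal (z x) := by
    rw [lintegral_eq_lintegral_meas_lt _ (Eventually.of_forall hf0) hf,
      lintegral_eq_lintegral_meas_lt _ (Eventually.of_forall hz0) hz.aemeasurable]
    exact setLIntegral_congr_fun measurableSet_Ioi hrearr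
  rw [h]
  exact (lintegral_ofReal_ne_top_iff_integrable hz.aestronglyMeasurable
    (Eventually.of_forall hz0)).2 hz

lemma intervalIntegral_neg_self_of_even {f : ℝ → ℝ} (hf : Integrable f)
    (heven : ∀ x, f (-x) = f x) (r : ℝ) :
    ∫ x in (-r)..r, f x = 2 * ∫ x in (0 : ℝ)..r, f x := by
  have hneg : ∫ x in (-r)..0, f x = ∫ x in (0 : ℝ)..r, f x := by
    have := intervalIntegral.integral_comp_neg (a := 0) (b := r) f
    simp only [heven, neg_zero] at this
    exact this.symm
  rw [← intervalIntegral.integral_add_adjacent_intervals (b := 0) hf.intervalIntegrable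
    hf.intervalIntegrable, hneg, two_mul]

/-- `sup {μ(A) : Leb(A) ≤ 2r}` is twice the value at `r` of the odd rearrangement. -/
lemma waveSup_eq_ofReal_odd_rearrangement {μ μs : Measure ℝ} [IsFiniteMeasure μs] {z : ℝ → ℝ}
    (hz : Integrable z) (hz0 : ∀ x, 0 ≤ z x) (hsing : μs ⟂ₘ volume)
    (hdecomp : μ = μs + volume.withDensity (fun x => ENNReal.ofReal (z x)))
    {f : ℝ → ℝ} (heven : ∀ x, f (-x) = f x) (hf0 : ∀ x, 0 ≤ f x)
    (hanti : AntitoneOn f (Ioi 0))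
    (hrearr : ∀ c > 0, volume {x | c < f x} = volume {x | c < z x}) {r : ℝ} (hr : 0 < r) :
    waveSup μ (2 * r) =
      ENNReal.ofReal (2 * ((μs univ).toReal / 2 + ∫ y in (0 : ℝ)..r, f y)) := by
  have hf := integrable_of_volume_superlevel_eq hz hz0
    (aemeasurable_of_even_of_antitoneOn heven hanti) hf0 hrearr
  rw [waveSup_eq_add_setLIntegral hz hz0 hsing hdecomp heven hf0 hanti hrearr hr,
    ← ofReal_integral_eq_lintegral_ofReal hf.integrableOn (Eventually.of_forall hf0),
    ← integral_Ioc_eq_integral_Ioo, ← intervalIntegral.integral_of_le (by linarith),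
    intervalIntegral_neg_self_of_even hf heven, mul_add, mul_div_cancel₀ _ two_ne_zero,
    ENNReal.ofReal_add ENNReal.toReal_nonneg, ENNReal.ofReal_toReal (measure_ne_top _ _)]
  exact mul_nonneg zero_le_two (intervalIntegral.integral_nonneg hr.le fun x _ => hf0 x)

/-- Formula (2.6) of Proposition 1: for finite positive measures `μ, μ'` with odd
rearrangements `vhat, vhat'`, one has `μ ⪯ μ'` iff `vhat x ≤ vhat' x` for all `x > 0`. -/
theorem prec_iff_odd_rearrangement_le
    (μ μs : Measure ℝ) [IsFiniteMeasure μ] [IsFiniteMeasure μs]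
    (z : ℝ → ℝ) (hz_int : Integrable z) (hz_nonneg : ∀ x, 0 ≤ z x)
    (hsing : μs ⟂ₘ volume)
    (hdecomp : μ = μs + volume.withDensity (fun x => ENNReal.ofReal (z x)))
    (zhat : ℝ → ℝ)
    (hzhat_even : ∀ x, zhat (-x) = zhat x)
    (hzhat_nonneg : ∀ x, 0 ≤ zhat x)
    (hzhat_anti : AntitoneOn zhat (Set.Ioi 0))
    (hzhat_rearr : ∀ c > 0, volume {x | c < zhat x} = volume {x | c < z x})
    (vhat : ℝ → ℝ)
    (hvhat_odd : ∀ x, vhat (-x) = -vhat x)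
    (hvhat_pos : ∀ x > 0, vhat x = (μs Set.univ).toReal / 2 + ∫ y in (0:ℝ)..x, zhat y)
    (μ' μs' : Measure ℝ) [IsFiniteMeasure μ'] [IsFiniteMeasure μs']
    (z' : ℝ → ℝ) (hz'_int : Integrable z') (hz'_nonneg : ∀ x, 0 ≤ z' x)
    (hsing' : μs' ⟂ₘ volume)
    (hdecomp' : μ' = μs' + volume.withDensity (fun x => ENNReal.ofReal (z' x)))
    (zhat' : ℝ → ℝ)
    (hzhat'_even : ∀ x, zhat' (-x) = zhat' x)
    (hzhat'_nonneg : ∀ x, 0 ≤ zhat' x)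
    (hzhat'_anti : AntitoneOn zhat' (Set.Ioi 0))
    (hzhat'_rearr : ∀ c > 0, volume {x | c < zhat' x} = volume {x | c < z' x})
    (vhat' : ℝ → ℝ)
    (hvhat'_odd : ∀ x, vhat' (-x) = -vhat' x)
    (hvhat'_pos : ∀ x > 0, vhat' x = (μs' Set.univ).toReal / 2 + ∫ y in (0:ℝ)..x, zhat' y) :
    MeasPrec μ μ' ↔ ∀ x > 0, vhat x ≤ vhat' x := by
  have h : ∀ r > 0, waveSup μ (2 * r) = ENNReal.ofReal (2 * vhat r) := fun r hr => by
    rw [hvhat_pos r hr]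
    exact waveSup_eq_ofReal_odd_rearrangement hz_int hz_nonneg hsing hdecomp hzhat_even
      hzhat_nonneg hzhat_anti hzhat_rearr hr
  have h' : ∀ r > 0, waveSup μ' (2 * r) = ENNReal.ofReal (2 * vhat' r) := fun r hr => by
    rw [hvhat'_pos r hr]
    exact waveSup_eq_ofReal_odd_rearrangement hz'_int hz'_nonneg hsing' hdecomp' hzhat'_even
      hzhat'_nonneg hzhat'_anti hzhat'_rearr hr
  have h0 : ∀ r > 0, 0 ≤ vhat' r := fun r hr => by
    rw [hvhat'_pos r hr]
    exact add_nonneg (by positivity)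
      (intervalIntegral.integral_nonneg hr.le fun x _ => hzhat'_nonneg x)
  have hiff : ∀ r > 0, waveSup μ (2 * r) ≤ waveSup μ' (2 * r) ↔ vhat r ≤ vhat' r := fun r hr => by
    rw [h r hr, h' r hr,
      ENNReal.ofReal_le_ofReal_iff (mul_nonneg zero_le_two (h0 r hr)),
      mul_le_mul_iff_right₀ two_pos]
  refine ⟨fun H x hx => (hiff x hx).1 (H _ (by positivity)), fun H s hs => ?_⟩
  have hs2 : 0 < s / 2 := by positivity
  simpa only [mul_div_cancel₀ s two_ne_zero] using (hiff _ hs2).2 (H _ hs2)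
end
end

section
/- Let w : ℝ → ℝ be a nondecreasing odd function, ν its associated Lebesgue–Stieltjes measure, and δ₀ the Dirac point mass at 0. Let μ and μ♯ be finite positive Borel measures on ℝ such that μ ⪯ ν and such that the total variation of the signed measure μ♯ − μ satisfies |μ♯ − μ|(ℝ) ≤ ε. Then μ♯ ⪯ ν + ε·δ₀. (Proposition 3.) -/
open MeasureTheory Set Filter
open scoped ENNReal

noncomputable section

theorem le_waveSup (μ : Measure ℝ) {s : ℝ} {A : Set ℝ} (hA : MeasurableSet A)
    (hAs : volume A ≤ ENNReal.ofReal s) : μ A ≤ waveSup μ s :=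
  le_iSup_of_le A <| le_iSup_of_le hA <| le_iSup_of_le hAs le_rfl

/-- Adding a point mass raises every value of `waveSup` by at least that mass, since a point can
be adjoined to a competitor at no cost in Lebesgue measure. -/
theorem waveSup_add_le_waveSup_add_smul_dirac (ν : Measure ℝ) (c : ℝ≥0∞) (x s : ℝ) :
    waveSup ν s + c ≤ waveSup (ν + c • Measure.dirac x) s := by
  have insert_le : ∀ B : Set ℝ, MeasurableSet B → volume B ≤ ENNReal.ofReal s →
      ν B + c ≤ waveSup (ν + c • Measure.dirac x) s := by
    intro B hB hBs
    have hvol : volume (insert x B) ≤ ENNReal.ofReal s := by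
      rwa [measure_congr (insert_ae_eq_self x B)]
    refine le_trans ?_ (le_waveSup _ (hB.insert x) hvol)
    simpa using add_le_add_left (measure_mono (μ := ν) (subset_insert x B)) c
  have hc : c ≤ waveSup (ν + c • Measure.dirac x) s := by
    simpa using insert_le ∅ MeasurableSet.empty (by simp)
  by_cases hctop : c = ∞
  · simp_all
  · exact ENNReal.le_sub_iff_add_le_right hctop hc |>.mp <|
      iSup₂_le fun B hB => iSup_le fun hBs =>
        ENNReal.le_sub_of_add_le_right hctop (insert_le B hB hBs)

theorem measure_le_add_totalVariation_sub {α : Type*} [MeasurableSpace α] (μ ν : Measure α)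
    [IsFiniteMeasure μ] [IsFiniteMeasure ν] {A : Set α} (hA : MeasurableSet A) :
    ν A ≤ μ A + (ν.toSignedMeasure - μ.toSignedMeasure).totalVariation univ := by
  set σ := ν.toSignedMeasure - μ.toSignedMeasure with hσ
  set j := σ.toJordanDecomposition with hj
  have hval : σ A = ν.real A - μ.real A := by
    simp [hσ, Measure.toSignedMeasure_apply_measurable hA]
  have hjordan : σ A = j.posPart.real A - j.negPart.real A := by
    rw [← SignedMeasure.toSignedMeasure_toJordanDecomposition σ]
    simp [JordanDecomposition.toSignedMeasure, hj, Measure.toSignedMeasure_apply_measurable hA]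
  have hreal : ν.real A ≤ μ.real A + j.posPart.real A := by
    linarith [measureReal_nonneg (μ := j.negPart) (s := A)]
  have hpos : ν A ≤ μ A + j.posPart A := by
    rw [← ENNReal.toReal_le_toReal (by finiteness) (by finiteness),
      ENNReal.toReal_add (by finiteness) (by finiteness)]
    exact hreal
  have htv : j.posPart A ≤ σ.totalVariation univ :=
    (measure_mono (subset_univ A)).trans (Measure.le_add_right le_rfl univ)
  exact hpos.trans (by gcongr)

/-- Proposition 3: if `μ ⪯ ν` where `ν` is the Lebesgue–Stieltjes measure of a
nondecreasing odd function `w`, and `|μ♯ − μ|(ℝ) ≤ ε`, then `μ♯ ⪯ ν + ε·δ₀`. -/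
theorem prec_perturbation
    (w : ℝ → ℝ) (hw_mono : Monotone w) (hw_odd : ∀ x, w (-x) = -w x)
    (μ μsharp : Measure ℝ) [IsFiniteMeasure μ] [IsFiniteMeasure μsharp]
    (ε : ℝ)
    (hprec : MeasPrec μ hw_mono.stieltjesFunction.measure)
    (hclose : (μsharp.toSignedMeasure - μ.toSignedMeasure).totalVariation Set.univ
        ≤ ENNReal.ofReal ε) :
    MeasPrec μsharp
      (hw_mono.stieltjesFunction.measure + ENNReal.ofReal ε • Measure.dirac 0) := by
  intro s hs
  have hdirac : waveSup hw_mono.stieltjesFunction.measure s + ENNReal.ofReal ε ≤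
      waveSup (hw_mono.stieltjesFunction.measure + ENNReal.ofReal ε • Measure.dirac 0) s :=
    waveSup_add_le_waveSup_add_smul_dirac _ _ 0 s
  refine le_trans (iSup₂_le fun A hA => iSup_le fun hAs => ?_) hdirac
  calc μsharp A ≤ μ A + (μsharp.toSignedMeasure - μ.toSignedMeasure).totalVariation univ :=
        measure_le_add_totalVariation_sub μ μsharp hA
    _ ≤ waveSup hw_mono.stieltjesFunction.measure s + ENNReal.ofReal ε :=
        add_le_add ((le_waveSup μ hA hAs).trans (hprec s hs)) hclose
end
end
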